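/- Let n and b be natural numbers with n ≥ 2, b even and b ≥ 2, and write s_i = b^(n+i) + 1. Then Ap(SC⁺(b,n), s_0) = { t_1·s_1 + t_2·s_2 + ⋯ + t_n·s_n : (t_1,…,t_n) ∈ RC_b(n) }. -/

import Mathlib

/-- The Cunningham numerical semigroup: the additive submonoid of ℕ generated by
`{b^(n+i) + 1 : i ∈ ℕ}`. -/
def cunninghamSemigroup (b n : ℕ) : AddSubmonoid ℕ :=
  AddSubmonoid.closure {m : ℕ | ∃ i : ℕ, m = b ^ (n + i) + 1}

/-- `RC_b(n)`: tuples `(t_1,…,t_n)` with entries in `{0,…,b}` (encoded as functions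
`ℕ → ℕ` supported on `{1,…,n}`) such that: if `t_i = b` then `t_j = 0` for all `j < i`;
`t_n ≤ b−1`; and if `t_n = b−1` then `t_1 ≤ 1` and `t_i = 0` for every index
`i ∉ {1, n}`. -/
def RCb (b n : ℕ) (t : ℕ → ℕ) : Prop :=
  (∀ j, t j ≤ b) ∧
  (∀ j, j ∉ Finset.Icc 1 n → t j = 0) ∧
  (∀ i, t i = b → ∀ j < i, t j = 0) ∧
  t n ≤ b - 1 ∧
  (t n = b - 1 → t 1 ≤ 1 ∧ ∀ i, i ≠ 1 → i ≠ n → t i = 0)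

/-! Write `r_i = 1 + b + ⋯ + b ^ (i - 1)`, so that `s_i = b ^ n * (b - 1) * r_i + s_0`. A sum of `T`
generators is `b ^ n * (b - 1) * K + s_0 * T`, where `K` is the sum of the corresponding `T`
repunits (with `r_0 = 0` allowed). As `b` is even, `b ^ n * (b - 1)` is a unit modulo `s_0`, so the
residue class determines `K` modulo `s_0`, and its Apéry element has `K < s_0` and uses the fewest
repunits for that `K`. Now `(b - 1) * K + T` is a sum of `T` powers of `b`, so its digit sum is at
most `T`. For the tuple `t` that writes `K` greedily and `N = (b - 1) * K + ∑ t_j = ∑ t_j * b ^ j`,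
the digit sum of `N - 1` is at least `∑ t_j`, which rules out every shorter representation of `K`.
Such tuples meet every residue class, and an Apéry set has only one element in each. -/

open Finset

section AperySet

/-- The Apéry set of an additive submonoid `S` of `ℕ` with respect to `a`. -/
def aperySet (S : AddSubmonoid ℕ) (a : ℕ) : Set ℕ :=
  {s | s ∈ S ∧ ¬ ∃ t ∈ S, t + a = s}

variable {S : AddSubmonoid ℕ} {a x y : ℕ}

lemma le_of_modEq_of_mem_aperySet (ha : a ∈ S) (hx : x ∈ aperySet S a) (hy : y ∈ S)
    (hxy : x ≡ y [MOD a]) : x ≤ y := by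
  by_contra! hlt
  obtain ⟨q, hq⟩ := (Nat.modEq_iff_dvd' hlt.le).mp hxy.symm
  obtain _ | q := q
  · lia
  · refine hx.2 ⟨y + q • a, add_mem hy (nsmul_mem ha q), ?_⟩
    rw [smul_eq_mul]
    lia

lemma aperySet_eq_of_subset_of_forall_modEq {W : Set ℕ} (ha : a ∈ S) (hW : W ⊆ aperySet S a)
    (hmod : ∀ x ∈ S, ∃ w ∈ W, w ≡ x [MOD a]) : aperySet S a = W := by
  refine hW.antisymm' fun x hx ↦ ?_
  obtain ⟨w, hw, hwx⟩ := hmod x hx.1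
  have hle : w ≤ x := le_of_modEq_of_mem_aperySet ha (hW hw) hx.1 hwx
  have hge : x ≤ w := le_of_modEq_of_mem_aperySet ha hx (hW hw).1 hwx.symm
  rwa [hge.antisymm hle]

end AperySet

section DigitSum

variable {b : ℕ}

lemma sum_digits_eq_mod_add (hb : 1 < b) (N : ℕ) :
    (b.digits N).sum = N % b + (b.digits (N / b)).sum := by
  obtain rfl | hN := eq_or_ne N 0
  · simp
  · rw [Nat.digits_eq_cons_digits_div hb hN, List.sum_cons]

lemma sum_digits_of_lt (hb : 1 < b) {d : ℕ} (hd : d < b) : (b.digits d).sum = d := by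
  simp [sum_digits_eq_mod_add hb d, Nat.mod_eq_of_lt hd, Nat.div_eq_of_lt hd]

lemma sum_digits_pos (hb : 1 < b) {N : ℕ} (hN : 0 < N) : 0 < (b.digits N).sum := by
  induction N using Nat.strong_induction_on with
  | _ N ih =>
    obtain hlt | hle := lt_or_ge N b
    · rwa [sum_digits_of_lt hb hlt]
    · rw [sum_digits_eq_mod_add hb]
      have := ih (N / b) (Nat.div_lt_self hN hb) (Nat.div_pos hle (by lia))
      lia

lemma sum_digits_add_one_le (hb : 1 < b) (N : ℕ) :
    (b.digits (N + 1)).sum ≤ (b.digits N).sum + 1 := by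
  induction N using Nat.strong_induction_on with
  | _ N ih =>
    rw [sum_digits_eq_mod_add hb N, sum_digits_eq_mod_add hb (N + 1), Nat.succ_div]
    split_ifs with hdvd
    · have hN : 0 < N := by
        have := Nat.le_of_dvd N.succ_pos hdvd
        lia
      have := ih (N / b) (Nat.div_lt_self hN hb)
      rw [Nat.mod_eq_zero_of_dvd hdvd]
      lia
    · have : (N + 1) % b ≤ N % b + 1 := Nat.mod_add_mod N b 1 ▸ Nat.mod_le _ _
      lia

lemma sum_digits_add_le (hb : 1 < b) (N k : ℕ) :
    (b.digits (N + k)).sum ≤ (b.digits N).sum + k := by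
  induction k with
  | zero => rfl
  | succ k ih => exact (sum_digits_add_one_le hb (N + k)).trans (Nat.succ_le_succ ih)

lemma sum_digits_add_pow_le (hb : 1 < b) (N i : ℕ) :
    (b.digits (N + b ^ i)).sum ≤ (b.digits N).sum + 1 := by
  induction i generalizing N with
  | zero => simpa using sum_digits_add_one_le hb N
  | succ i ih =>
    rw [sum_digits_eq_mod_add hb N, sum_digits_eq_mod_add hb (N + b ^ (i + 1)), pow_succ,
      Nat.add_mul_mod_self_right, Nat.add_mul_div_right _ _ (by lia)]
    have := ih (N / b)
    lia

lemma sum_digits_pow_mul_add (hb : 1 < b) (q : ℕ) {m r : ℕ} (hr : r < b ^ m) :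
    (b.digits (b ^ m * q + r)).sum = (b.digits q).sum + (b.digits r).sum := by
  induction m generalizing r with
  | zero =>
    obtain rfl : r = 0 := by simpa using hr
    simp
  | succ m ih =>
    have hdiv : (b ^ (m + 1) * q + r) / b = b ^ m * q + r / b := by
      rw [pow_succ', mul_assoc, Nat.mul_add_div (by lia)]
    have hmod : (b ^ (m + 1) * q + r) % b = r % b := by
      rw [pow_succ', mul_assoc, Nat.mul_add_mod]
    rw [sum_digits_eq_mod_add hb, hdiv, hmod, ih (Nat.div_lt_of_lt_mul (pow_succ' b m ▸ hr)),
      sum_digits_eq_mod_add hb r]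
    lia

end DigitSum

section Repunit

/-- The repunit `1 + b + ⋯ + b ^ (i - 1)`, with `i` digits `1` in base `b`; it measures how far the
generator `b ^ (n + i) + 1` lies above `b ^ n + 1`, in units of `b ^ n * (b - 1)`. -/
def repunit (b i : ℕ) : ℕ := ∑ k ∈ range i, b ^ k

variable {b : ℕ}

@[simp]
lemma repunit_zero : repunit b 0 = 0 := rfl

@[simp]
lemma repunit_one : repunit b 1 = 1 := by simp [repunit]

lemma repunit_succ (i : ℕ) : repunit b (i + 1) = b * repunit b i + 1 := geom_sum_succ

lemma repunit_pos {i : ℕ} (hi : 0 < i) : 0 < repunit b i := by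
  obtain ⟨i, rfl⟩ := Nat.exists_eq_add_one.mpr hi
  rw [repunit_succ]
  lia

lemma two_le_repunit (hb : 0 < b) {i : ℕ} (hi : 2 ≤ i) : 2 ≤ repunit b i := by
  obtain ⟨i, rfl⟩ := Nat.exists_eq_add_of_le' hi
  rw [repunit_succ]
  have := Nat.mul_pos hb (repunit_pos (b := b) i.succ_pos)
  lia

lemma sub_one_mul_repunit_add_one (hb : 0 < b) (i : ℕ) : (b - 1) * repunit b i + 1 = b ^ i := by
  obtain ⟨c, rfl⟩ := Nat.exists_eq_add_one.mpr hb
  rw [Nat.add_sub_cancel, mul_comm]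
  exact geom_sum_mul_add c i

lemma pow_le_mul_repunit (hb : 0 < b) {i : ℕ} (hi : 0 < i) : b ^ i ≤ b * repunit b i := by
  obtain ⟨c, rfl⟩ := Nat.exists_eq_add_one.mpr hb
  rw [← sub_one_mul_repunit_add_one hb, Nat.add_sub_cancel, add_one_mul]
  exact Nat.add_le_add_left (repunit_pos hi) _

lemma pow_add_add_one_eq_mul_repunit_add (hb : 0 < b) (n i : ℕ) :
    b ^ (n + i) + 1 = b ^ n * (b - 1) * repunit b i + (b ^ n + 1) := by
  rw [pow_add, ← sub_one_mul_repunit_add_one hb i]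
  ring

lemma coprime_pow_add_one_pow_mul_sub_one (hb : 0 < b) (hbe : Even b) (n : ℕ) :
    Nat.Coprime (b ^ n + 1) (b ^ n * (b - 1)) := by
  have hodd : Odd (b - 1) := Nat.Even.sub_odd hb hbe odd_one
  refine Nat.Coprime.mul_right (by simp) ?_
  rw [← sub_one_mul_repunit_add_one hb, add_assoc, mul_comm, Nat.coprime_mul_right_add_left]
  exact Nat.coprime_two_left.mpr hodd

end Repunit

section GreedyDigits

/-- The digit condition satisfied by the greedy expansions `∑ t_j * repunit b j`: digits are at most
`b`, and below a digit `b` there are only zeros. It is the part of `RCb` that does not refer to `n`;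
the support of `t` is left free. -/
structure IsGreedy (b : ℕ) (t : ℕ → ℕ) : Prop where
  le (j : ℕ) : t j ≤ b
  eq_zero_of_lt (i : ℕ) (hi : t i = b) (j : ℕ) (hj : j < i) : t j = 0

variable {b : ℕ} {t : ℕ → ℕ}

lemma IsGreedy.sum_Icc_eq_zero (ht : IsGreedy b t) {m : ℕ} (hm : t (m + 1) = b) (w : ℕ → ℕ) :
    ∑ j ∈ Icc 1 m, t j * w j = 0 :=
  sum_eq_zero fun j hj ↦ by
    rw [ht.eq_zero_of_lt _ hm j (Nat.lt_succ_of_le (mem_Icc.mp hj).2), zero_mul]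

lemma IsGreedy.sum_mul_le (ht : IsGreedy b t) {w : ℕ → ℕ} (hw : ∀ j, b * w j ≤ w (j + 1)) (m : ℕ) :
    ∑ j ∈ Icc 1 m, t j * w j ≤ b * w m := by
  induction m with
  | zero => simp
  | succ m ih =>
    rw [sum_Icc_succ_top (by lia)]
    obtain heq | hlt := (ht.le (m + 1)).eq_or_lt
    · rw [ht.sum_Icc_eq_zero heq, heq, zero_add]
    · calc ∑ j ∈ Icc 1 m, t j * w j + t (m + 1) * w (m + 1)
          ≤ w (m + 1) + t (m + 1) * w (m + 1) := by gcongr; exact ih.trans (hw m)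
        _ = (t (m + 1) + 1) * w (m + 1) := by ring
        _ ≤ b * w (m + 1) := by gcongr; exact hlt

lemma IsGreedy.sum_mul_repunit_le (ht : IsGreedy b t) (m : ℕ) :
    ∑ j ∈ Icc 1 m, t j * repunit b j ≤ b * repunit b m :=
  ht.sum_mul_le (fun j ↦ (repunit_succ (b := b) j).symm ▸ Nat.le_succ _) m

lemma IsGreedy.sum_mul_pow_le (ht : IsGreedy b t) (m : ℕ) :
    ∑ j ∈ Icc 1 m, t j * b ^ j ≤ b ^ (m + 1) :=
  (ht.sum_mul_le (fun j ↦ (pow_succ' b j).ge) m).trans_eq (pow_succ' b m).symm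

/-- Subtracting `1` borrows at least once, since there is no digit at index `0`. If the sum is `0`,
the truncated subtraction makes both sides `0`. -/
lemma IsGreedy.sum_le_sum_digits_sub_one (hb : 1 < b) (ht : IsGreedy b t) (m : ℕ) :
    ∑ j ∈ Icc 1 m, t j ≤ (b.digits (∑ j ∈ Icc 1 m, t j * b ^ j - 1)).sum := by
  induction m with
  | zero => simp
  | succ m ih =>
    rw [sum_Icc_succ_top (by lia), sum_Icc_succ_top (by lia), mul_comm (t (m + 1))]
    have hle := ht.sum_mul_pow_le m
    have htop := ht.le (m + 1)
    set d := t (m + 1)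
    set L := ∑ j ∈ Icc 1 m, t j * b ^ j
    have hpow : 1 < b ^ (m + 1) := Nat.one_lt_pow m.succ_ne_zero hb
    obtain hL0 | hLpos := L.eq_zero_or_pos
    · have hsum : ∑ j ∈ Icc 1 m, t j = 0 := by simpa [hL0] using ih
      obtain hd0 | hdpos := d.eq_zero_or_pos
      · simp [hsum, hd0]
      · have hsub : L + b ^ (m + 1) * d - 1 = b ^ (m + 1) * (d - 1) + (b ^ (m + 1) - 1) := by
          rw [hL0, Nat.mul_sub_one]
          have := Nat.le_mul_of_pos_right (b ^ (m + 1)) hdpos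
          lia
        have hborrow : 0 < (b.digits (b ^ (m + 1) - 1)).sum := sum_digits_pos hb (by lia)
        rw [hsub, sum_digits_pow_mul_add hb _ (by lia), sum_digits_of_lt hb (by lia)]
        lia
    · have hd : d < b := htop.lt_of_ne fun h ↦ hLpos.ne' (ht.sum_Icc_eq_zero h _)
      have hsub : L + b ^ (m + 1) * d - 1 = b ^ (m + 1) * d + (L - 1) := by lia
      rw [hsub, sum_digits_pow_mul_add hb _ (by lia), sum_digits_of_lt hb hd]
      lia

lemma sum_le_sum_mul_repunit (t : ℕ → ℕ) (m : ℕ) :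
    ∑ j ∈ Icc 1 m, t j ≤ ∑ j ∈ Icc 1 m, t j * repunit b j :=
  sum_le_sum fun _ hj ↦ Nat.le_mul_of_pos_right _ (repunit_pos (mem_Icc.mp hj).1)

lemma sum_mul_pow_eq (hb : 0 < b) (t : ℕ → ℕ) (s : Finset ℕ) :
    ∑ j ∈ s, t j * b ^ j = (b - 1) * ∑ j ∈ s, t j * repunit b j + ∑ j ∈ s, t j := by
  rw [mul_sum, ← sum_add_distrib]
  refine sum_congr rfl fun j _ ↦ ?_
  rw [← sub_one_mul_repunit_add_one hb j]
  ring

lemma IsGreedy.sum_le_of_sum_digits_le (hb : 1 < b) (ht : IsGreedy b t) {m T : ℕ}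
    (hT : (b.digits ((b - 1) * ∑ j ∈ Icc 1 m, t j * repunit b j + T)).sum ≤ T) :
    ∑ j ∈ Icc 1 m, t j ≤ T := by
  by_contra! hlt
  obtain ⟨k, hk⟩ := Nat.exists_eq_add_of_lt hlt
  have hsub : ∑ j ∈ Icc 1 m, t j * b ^ j - 1
      = (b - 1) * ∑ j ∈ Icc 1 m, t j * repunit b j + T + k := by
    rw [sum_mul_pow_eq (by lia)]
    lia
  have hle := ht.sum_le_sum_digits_sub_one hb m
  rw [hsub] at hle
  have := sum_digits_add_le hb ((b - 1) * ∑ j ∈ Icc 1 m, t j * repunit b j + T) k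
  lia

lemma isGreedy_single (hb : 0 < b) (i : ℕ) : IsGreedy b (Pi.single i b) where
  le j := by
    rw [Pi.single_apply]
    split_ifs <;> simp
  eq_zero_of_lt k hk j hj := by
    obtain rfl : k = i := by
      by_contra! hki
      rw [Pi.single_eq_of_ne hki] at hk
      exact hb.ne hk
    exact Pi.single_eq_of_ne hj.ne _

lemma IsGreedy.update (ht : IsGreedy b t) {i d : ℕ} (hsupp : ∀ j, i < j → t j = 0) (hd : d < b) :
    IsGreedy b (Function.update t i d) where
  le j := by
    rw [Function.update_apply]
    split_ifs
    exacts [hd.le, ht.le j]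
  eq_zero_of_lt k hk j hj := by
    rw [Function.update_apply] at hk
    split_ifs at hk with hki
    · exact absurd hk hd.ne
    · have hle : k ≤ i := by
        by_contra! hik
        have := hsupp k hik
        lia
      rw [Function.update_of_ne (by lia)]
      exact ht.eq_zero_of_lt k hk j hj

lemma exists_isGreedy_sum_mul_repunit_eq (hb : 0 < b) {m K : ℕ} (hK : K ≤ b * repunit b m) :
    ∃ t, IsGreedy b t ∧ (∀ j ∉ Icc 1 m, t j = 0) ∧ ∑ j ∈ Icc 1 m, t j * repunit b j = K := by
  induction m generalizing K with
  | zero =>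
    obtain rfl : K = 0 := by simpa using hK
    exact ⟨0, ⟨by simp, by simp⟩, by simp, by simp⟩
  | succ m ih =>
    have hR : 0 < repunit b (m + 1) := repunit_pos m.succ_pos
    have hmod : K % repunit b (m + 1) ≤ b * repunit b m :=
      Nat.lt_succ_iff.mp ((Nat.mod_lt K hR).trans_eq (repunit_succ m))
    obtain rfl | hlt := hK.eq_or_lt
    · refine ⟨Pi.single (m + 1) b, isGreedy_single hb _, fun j hj ↦ ?_, ?_⟩
      · exact Pi.single_eq_of_ne (by rintro rfl; simp at hj) _
      · simp [Pi.single_apply]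
    · obtain ⟨t, ht, hsupp, hsum⟩ := ih hmod
      have hzero (j : ℕ) (hj : m < j) : t j = 0 := hsupp j (by simp [hj])
      refine ⟨Function.update t (m + 1) (K / repunit b (m + 1)),
        ht.update (fun j hj ↦ hzero j (by lia)) (Nat.div_lt_of_lt_mul (by rwa [mul_comm])),
        fun j hj ↦ ?_, ?_⟩
      · rw [mem_Icc] at hj
        rw [Function.update_of_ne (by rintro rfl; simp at hj)]
        exact hsupp j (by rw [mem_Icc]; lia)
      · have hlow : ∀ j ∈ Icc 1 m, Function.update t (m + 1) (K / repunit b (m + 1)) j = t j :=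
          fun j hj ↦ Function.update_of_ne (by rw [mem_Icc] at hj; lia) _ _
        rw [sum_Icc_succ_top (by lia), sum_congr rfl fun j hj ↦ by rw [hlow j hj], hsum,
          Function.update_self, Nat.mod_add_div']

lemma RCb.isGreedy {n : ℕ} (h : RCb b n t) : IsGreedy b t := ⟨h.1, h.2.2.1⟩

lemma RCb.sum_mul_repunit_le_pow {n : ℕ} (hn : 2 ≤ n) (hb : 0 < b) (h : RCb b n t) :
    ∑ j ∈ Icc 1 n, t j * repunit b j ≤ b ^ n := by
  obtain ⟨m, rfl⟩ := Nat.exists_eq_add_of_le' (one_le_two.trans hn)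
  obtain ⟨htop, htop_eq⟩ := h.2.2.2
  rw [← sub_one_mul_repunit_add_one hb, sum_Icc_succ_top (by lia)]
  obtain heq | hlt := htop.eq_or_lt
  · obtain ⟨hone, hrest⟩ := htop_eq heq
    have hlow : ∑ j ∈ Icc 1 m, t j * repunit b j = t 1 * repunit b 1 := by
      refine sum_eq_single_of_mem 1 (mem_Icc.mpr (by lia)) fun j hj hj1 ↦ ?_
      rw [hrest j hj1 (by rw [mem_Icc] at hj; lia), zero_mul]
    rw [hlow, heq, repunit_one, mul_one, add_comm]
    exact Nat.add_le_add_left hone _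
  · calc ∑ j ∈ Icc 1 m, t j * repunit b j + t (m + 1) * repunit b (m + 1)
        ≤ repunit b (m + 1) + t (m + 1) * repunit b (m + 1) := by
          gcongr
          exact (h.isGreedy.sum_mul_repunit_le m).trans (repunit_succ (b := b) m ▸ Nat.le_succ _)
      _ = (t (m + 1) + 1) * repunit b (m + 1) := by ring
      _ ≤ (b - 1) * repunit b (m + 1) := by gcongr; exact hlt
      _ ≤ (b - 1) * repunit b (m + 1) + 1 := Nat.le_succ _

lemma RCb.of_isGreedy (hb : 0 < b) (ht : IsGreedy b t) {n : ℕ} (hn : 2 ≤ n)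
    (hsupp : ∀ j ∉ Icc 1 n, t j = 0) (hK : ∑ j ∈ Icc 1 n, t j * repunit b j ≤ b ^ n) :
    RCb b n t := by
  obtain ⟨m, rfl⟩ := Nat.exists_eq_add_of_le' (one_le_two.trans hn)
  rw [← sub_one_mul_repunit_add_one hb, sum_Icc_succ_top (by lia)] at hK
  refine ⟨ht.le, hsupp, ht.eq_zero_of_lt, ?_, fun htop ↦ ?_⟩
  · by_contra! hlt
    have hR : 2 ≤ repunit b (m + 1) := two_le_repunit hb hn
    have : (b - 1 + 1) * repunit b (m + 1) ≤ t (m + 1) * repunit b (m + 1) := by gcongr; exact hlt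
    rw [add_one_mul] at this
    lia
  · have hlow : ∑ j ∈ Icc 1 m, t j * repunit b j ≤ 1 := by rw [htop] at hK; lia
    have hterm (j : ℕ) (hj : j ∈ Icc 1 m) : t j * repunit b j ≤ 1 :=
      (single_le_sum (f := fun j ↦ t j * repunit b j) (fun _ _ ↦ Nat.zero_le _) hj).trans hlow
    refine ⟨by simpa using hterm 1 (mem_Icc.mpr (by lia)), fun i hi1 hin ↦ ?_⟩
    by_cases hi : i ∈ Icc 1 m
    · have hR : 2 ≤ repunit b i := two_le_repunit hb (by rw [mem_Icc] at hi; lia)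
      by_contra! hti
      have := Nat.mul_le_mul (Nat.pos_of_ne_zero hti) hR
      have := hterm i hi
      lia
    · exact hsupp i (by rw [mem_Icc] at hi ⊢; lia)

end GreedyDigits

section Cunningham

variable {b n : ℕ}

lemma pow_add_one_mem_cunninghamSemigroup (b n i : ℕ) :
    b ^ (n + i) + 1 ∈ cunninghamSemigroup b n :=
  AddSubmonoid.subset_closure ⟨i, rfl⟩

lemma sum_mul_mem_cunninghamSemigroup (b n : ℕ) (t : ℕ → ℕ) (s : Finset ℕ) :
    ∑ j ∈ s, t j * (b ^ (n + j) + 1) ∈ cunninghamSemigroup b n :=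
  sum_mem fun j _ ↦ nsmul_mem (pow_add_one_mem_cunninghamSemigroup b n j) (t j)

lemma sum_mul_pow_add_add_one_eq (hb : 0 < b) (n : ℕ) (t : ℕ → ℕ) (s : Finset ℕ) :
    ∑ j ∈ s, t j * (b ^ (n + j) + 1)
      = b ^ n * (b - 1) * ∑ j ∈ s, t j * repunit b j + (b ^ n + 1) * ∑ j ∈ s, t j := by
  rw [mul_sum, mul_sum, ← sum_add_distrib]
  refine sum_congr rfl fun j _ ↦ ?_
  rw [pow_add_add_one_eq_mul_repunit_add hb]
  ring

lemma exists_sum_digits_le_of_mem_cunninghamSemigroup (hb : 1 < b) {x : ℕ}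
    (hx : x ∈ cunninghamSemigroup b n) :
    ∃ K T, (b.digits ((b - 1) * K + T)).sum ≤ T ∧
      x = b ^ n * (b - 1) * K + (b ^ n + 1) * T := by
  unfold cunninghamSemigroup at hx
  induction hx using AddSubmonoid.closure_induction_left with
  | zero => exact ⟨0, 0, by simp, by simp⟩
  | add_left x hx y _ ih =>
    obtain ⟨i, rfl⟩ := hx
    obtain ⟨K, T, hT, rfl⟩ := ih
    refine ⟨K + repunit b i, T + 1, ?_, ?_⟩
    · calc (b.digits ((b - 1) * (K + repunit b i) + (T + 1))).sum
          = (b.digits ((b - 1) * K + T + b ^ i)).sum := by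
            rw [← sub_one_mul_repunit_add_one (by lia) i]
            ring_nf
        _ ≤ T + 1 := (sum_digits_add_pow_le hb _ i).trans (by lia)
    · rw [pow_add_add_one_eq_mul_repunit_add (by lia)]
      ring

lemma IsGreedy.sum_mem_aperySet (hb : 1 < b) (hbe : Even b) {t : ℕ → ℕ} (ht : IsGreedy b t) {m : ℕ}
    (hK : ∑ j ∈ Icc 1 m, t j * repunit b j ≤ b ^ n) :
    ∑ j ∈ Icc 1 m, t j * (b ^ (n + j) + 1) ∈ aperySet (cunninghamSemigroup b n) (b ^ n + 1) := by
  refine ⟨sum_mul_mem_cunninghamSemigroup b n t _, ?_⟩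
  rintro ⟨y, hy, hyx⟩
  obtain ⟨K, T, hT, rfl⟩ := exists_sum_digits_le_of_mem_cunninghamSemigroup hb hy
  rw [sum_mul_pow_add_add_one_eq (by lia)] at hyx
  have hτ := sum_le_sum_mul_repunit (b := b) t m
  have hopt := ht.sum_le_of_sum_digits_le hb (m := m) (T := T)
  set k := ∑ j ∈ Icc 1 m, t j * repunit b j
  set τ := ∑ j ∈ Icc 1 m, t j
  have hmod : K ≡ k [MOD b ^ n + 1] := by
    refine Nat.ModEq.cancel_left_of_coprime (coprime_pow_add_one_pow_mul_sub_one (by lia) hbe n) ?_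
    simpa [Nat.ModEq, ← mul_add_one, add_assoc] using congrArg (· % (b ^ n + 1)) hyx
  obtain ⟨q, rfl⟩ : ∃ q, K = k + (b ^ n + 1) * q := by
    refine ⟨K / (b ^ n + 1), ?_⟩
    conv_lhs => rw [← Nat.mod_add_div K (b ^ n + 1), hmod, Nat.mod_eq_of_lt (Nat.lt_succ_of_le hK)]
  have hτ_eq : τ = b ^ n * (b - 1) * q + T + 1 :=
    Nat.eq_of_mul_eq_mul_left (Nat.succ_pos (b ^ n)) (by linarith)
  obtain rfl | hq := q.eq_zero_or_pos
  · have := hopt (by simpa using hT)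
    lia
  · have : b ^ n ≤ b ^ n * (b - 1) * q :=
      (Nat.le_mul_of_pos_right _ (by lia)).trans (Nat.le_mul_of_pos_right _ hq)
    lia

lemma exists_RCb_sum_modEq (hn : 2 ≤ n) (hb : 1 < b) {x : ℕ} (hx : x ∈ cunninghamSemigroup b n) :
    ∃ t, RCb b n t ∧ ∑ j ∈ Icc 1 n, t j * (b ^ (n + j) + 1) ≡ x [MOD b ^ n + 1] := by
  obtain ⟨K, T, -, rfl⟩ := exists_sum_digits_le_of_mem_cunninghamSemigroup hb hx
  have hle : K % (b ^ n + 1) ≤ b ^ n := Nat.lt_succ_iff.mp (Nat.mod_lt K (by lia))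
  obtain ⟨t, ht, hsupp, hsum⟩ := exists_isGreedy_sum_mul_repunit_eq (b := b) (m := n) (by lia)
    (hle.trans (pow_le_mul_repunit (by lia) (by lia)))
  refine ⟨t, .of_isGreedy (by lia) ht hn hsupp (hsum.trans_le hle), ?_⟩
  rw [sum_mul_pow_add_add_one_eq (by lia), hsum]
  simp [Nat.ModEq]

end Cunningham

theorem cunningham_apery_set (n b : ℕ) (hn : 2 ≤ n) (hb : 2 ≤ b) (hbe : Even b) :
    {s : ℕ | s ∈ cunninghamSemigroup b n ∧
        ¬ ∃ t ∈ cunninghamSemigroup b n, t + (b ^ n + 1) = s}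
      = {x : ℕ | ∃ t : ℕ → ℕ, RCb b n t ∧
          x = ∑ j ∈ Finset.Icc 1 n, t j * (b ^ (n + j) + 1)} := by
  refine aperySet_eq_of_subset_of_forall_modEq (pow_add_one_mem_cunninghamSemigroup b n 0) ?_ ?_
  · rintro _ ⟨t, ht, rfl⟩
    exact ht.isGreedy.sum_mem_aperySet hb hbe (ht.sum_mul_repunit_le_pow hn (by lia))
  · intro x hx
    obtain ⟨t, ht, hmod⟩ := exists_RCb_sum_modEq hn hb hx
    exact ⟨_, ⟨t, ht, rfl⟩, hmod⟩
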